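/- arXiv:2508.18270 — 7 statements merged into one kernel-verified Lean document; each statement's English description precedes it below -/
import Mathlib

section
/- Let P be a finite set of primes with 3 ∉ P, and set N = 3·∏_{p∈P} p. Consider the moduli {3} ∪ {3p : p ∈ P}. Then the minimum, over all choices of residues a₀ (mod 3) and a_p (mod 3p) for p ∈ P, of the number of residues r with 0 ≤ r < N satisfying r ≢ a₀ (mod 3) and r ≢ a_p (mod 3p) for all p ∈ P, equals the minimum over all partitions P = P₁ ⊔ P₂ of the quantity ∏_{p∈P₁}(p−1)·∏_{p∈P₂} p + ∏_{p∈P₁} p·∏_{p∈P₂}(p−1). -/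
/-!
The class `a₀` modulo `3` removes one of the three classes modulo `3`, and each class `a p` modulo
`3 * p` meets just one of the other two classes, or none of them. Inside a fixed class modulo `3`
the Chinese remainder theorem makes the conditions for different `p` independent: `p` contributes
the factor `p - 1` if `a p` lies in that class and `p` otherwise. The number of uncovered residues
is therefore a sum of two such products, one for each remaining class. Moving an `a p` from the
class of `a₀` to one of the remaining classes can only decrease this sum, so the
minimum is attained when the `p ∈ P` are partitioned between the two.
-/

section

open Finset Function

lemma card_filter_range_mul {m n : ℕ} (hmn : m.Coprime n) {A B : ℕ → Prop}
    [DecidablePred A] [DecidablePred B] (hA : Periodic A m) (hB : Periodic B n) :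
    #{r ∈ range (m * n) | A r ∧ B r} = #{r ∈ range m | A r} * #{r ∈ range n | B r} := by
  rw [← card_product]
  refine card_bij (fun r _ => (r % m, r % n)) ?maps ?inj ?surj
  case maps =>
    intro r hr
    rw [mem_filter, mem_range] at hr
    obtain ⟨hr, hAr, hBr⟩ := hr
    have hm : 0 < m := Nat.pos_of_mul_pos_right (Nat.zero_lt_of_lt hr)
    have hn : 0 < n := Nat.pos_of_mul_pos_left (Nat.zero_lt_of_lt hr)
    simpa [hA.map_mod_nat, hB.map_mod_nat, hAr, hBr] using ⟨r.mod_lt hm, r.mod_lt hn⟩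
  case inj =>
    intro r hr r' hr' h
    have hmod : r ≡ r' [MOD m * n] :=
      (Nat.modEq_and_modEq_iff_modEq_mul hmn).1 (Prod.mk.inj h)
    rw [mem_filter, mem_range] at hr hr'
    exact hmod.eq_of_lt_of_lt hr.1 hr'.1
  case surj =>
    rintro ⟨x, y⟩ hxy
    simp only [mem_product, mem_filter, mem_range] at hxy
    obtain ⟨⟨hx, hAx⟩, hy, hBy⟩ := hxy
    obtain ⟨hzx, hzy⟩ := (Nat.chineseRemainder hmn x y).2
    have hz := Nat.chineseRemainder_lt_mul hmn x y (Nat.ne_zero_of_lt hx) (Nat.ne_zero_of_lt hy)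
    set z : ℕ := (Nat.chineseRemainder hmn x y).1
    replace hzx : z % m = x := Nat.mod_eq_of_modEq hzx hx
    replace hzy : z % n = y := Nat.mod_eq_of_modEq hzy hy
    have hAz : A z := by rwa [← hA.map_mod_nat, hzx]
    have hBz : B z := by rwa [← hB.map_mod_nat, hzy]
    exact ⟨z, by simpa using ⟨hz, hAz, hBz⟩, by rw [hzx, hzy]⟩

lemma periodic_forall_mem {ι : Type*} {s : Finset ι} {m : ι → ℕ} {A : ι → ℕ → Prop}
    (hA : ∀ i ∈ s, Periodic (A i) (m i)) :
    Periodic (fun r => ∀ i ∈ s, A i r) (∏ i ∈ s, m i) := by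
  intro r
  refine propext (forall₂_congr fun i hi => ?_)
  obtain ⟨k, hk⟩ := dvd_prod_of_mem m hi
  rw [hk, mul_comm]
  exact ((hA i hi).nat_mul k r).to_iff

lemma card_filter_range_prod {ι : Type*} {s : Finset ι} {m : ι → ℕ}
    (hm : (s : Set ι).Pairwise (Nat.Coprime on m)) {A : ι → ℕ → Prop}
    [∀ i, DecidablePred (A i)] (hA : ∀ i ∈ s, Periodic (A i) (m i)) :
    #{r ∈ range (∏ i ∈ s, m i) | ∀ i ∈ s, A i r} = ∏ i ∈ s, #{r ∈ range (m i) | A i r} := by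
  induction s using cons_induction with
  | empty => simp
  | cons i s hi ih =>
    rw [forall_mem_cons] at hA
    have hcop : (m i).Coprime (∏ j ∈ s, m j) := Nat.Coprime.prod_right fun j hj =>
      hm (mem_cons_self i s) (mem_cons_of_mem hj) (ne_of_mem_of_not_mem hj hi).symm
    have hs : (s : Set ι).Pairwise (Nat.Coprime on m) :=
      hm.mono fun j hj => mem_cons_of_mem hj
    simp only [prod_cons, forall_mem_cons]
    rw [card_filter_range_mul hcop hA.1 (periodic_forall_mem hA.2), ih hs hA.2]

lemma periodic_natCast_modEq (n : ℕ) (a : ℤ) :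
    Periodic (fun r : ℕ => (r : ℤ) ≡ a [ZMOD n]) n := by
  intro r
  simp [Int.ModEq]

lemma card_filter_range_modEq {n : ℕ} (hn : 0 < n) (a : ℤ) :
    #((range n).filter fun r : ℕ => (r : ℤ) ≡ a [ZMOD n]) = 1 := by
  obtain ⟨z, hz, hza⟩ := Int.existsUnique_equiv_nat a (Int.natCast_pos.2 hn)
  rw [Nat.cast_lt] at hz
  refine card_eq_one.2 ⟨z, Finset.ext fun r => ?_⟩
  rw [mem_filter, mem_range, mem_singleton]
  refine ⟨fun ⟨hr, hra⟩ => ?_, fun h => h ▸ ⟨hz, hza⟩⟩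
  exact (Int.natCast_modEq_iff.1 (hra.trans hza.symm)).eq_of_lt_of_lt hr hz

lemma card_filter_range_not_modEq (n : ℕ) (a : ℤ) :
    #((range n).filter fun r : ℕ => ¬ (r : ℤ) ≡ a [ZMOD n]) = n - 1 := by
  obtain rfl | hn := n.eq_zero_or_pos
  · simp
  · rw [filter_not, card_sdiff_of_subset (filter_subset _ _), card_range,
      card_filter_range_modEq hn]

variable {ι : Type*} [DecidableEq ι] {s t u : Finset ι}

/-- The number of residues modulo `∏ i ∈ s, m i`, for pairwise coprime `m i`, that avoid one
prescribed class modulo `m i` for each `i ∈ t`; elements of `t` outside `s` are ignored. -/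
def avoidCount (m : ι → ℕ) (s t : Finset ι) : ℕ :=
  ∏ i ∈ s, if i ∈ t then m i - 1 else m i

lemma avoidCount_eq_prod_mul_prod_sdiff (m : ι → ℕ) (h : t ⊆ s) :
    avoidCount m s t = (∏ i ∈ t, (m i - 1)) * ∏ i ∈ s \ t, m i := by
  have hprod := prod_piecewise s t (fun i => m i - 1) m
  rwa [inter_eq_right.2 h] at hprod

lemma avoidCount_anti (m : ι → ℕ) (h : t ⊆ u) : avoidCount m s u ≤ avoidCount m s t := by
  refine prod_le_prod' fun i _ => ?_
  split_ifs with hu ht ht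
  exacts [le_rfl, Nat.sub_le _ _, absurd (h ht) hu, le_rfl]

lemma card_filter_modEq_and_forall_not_modEq {ℓ : ℕ} (hℓ : 0 < ℓ) {m : ι → ℕ}
    (hm : (s : Set ι).Pairwise (Nat.Coprime on m)) (hℓm : ∀ i ∈ s, ℓ.Coprime (m i))
    (c : ℤ) (a : ι → ℤ) :
    #((range (ℓ * ∏ i ∈ s, m i)).filter fun r : ℕ =>
        (r : ℤ) ≡ c [ZMOD ℓ] ∧ ∀ i ∈ s, ¬ (r : ℤ) ≡ a i [ZMOD ℓ * m i])
      = avoidCount m s {i ∈ s | a i ≡ c [ZMOD ℓ]} := by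
  have hsplit (r : ℕ) : ((r : ℤ) ≡ c [ZMOD ℓ] ∧ ∀ i ∈ s, ¬ (r : ℤ) ≡ a i [ZMOD ℓ * m i]) ↔
      (r : ℤ) ≡ c [ZMOD ℓ] ∧ ∀ i ∈ s, a i ≡ c [ZMOD ℓ] → ¬ (r : ℤ) ≡ a i [ZMOD m i] := by
    refine and_congr_right fun hr => forall₂_congr fun i hi => ?_
    rw [← Int.modEq_and_modEq_iff_modEq_mul (by simpa using hℓm i hi), not_and]
    exact imp_congr_left ⟨fun h => h.symm.trans hr, fun h => hr.trans h.symm⟩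
  have hperiodic : ∀ i ∈ s,
      Periodic (fun r : ℕ => a i ≡ c [ZMOD ℓ] → ¬ (r : ℤ) ≡ a i [ZMOD m i]) (m i) := fun i _ r =>
    congrArg (fun q => a i ≡ c [ZMOD ℓ] → ¬ q) (periodic_natCast_modEq (m i) (a i) r)
  simp only [hsplit]
  rw [card_filter_range_mul (Nat.Coprime.prod_right hℓm) (periodic_natCast_modEq ℓ c)
    (periodic_forall_mem hperiodic), card_filter_range_modEq hℓ, one_mul,
    card_filter_range_prod hm hperiodic]
  refine prod_congr rfl fun i hi => ?_
  by_cases hi' : a i ≡ c [ZMOD ℓ]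
  · simp [hi, hi', card_filter_range_not_modEq]
  · simp [hi']

lemma not_modEq_three_iff {x c : ℤ} :
    ¬ x ≡ c [ZMOD 3] ↔ x ≡ c + 1 [ZMOD 3] ∨ x ≡ c + 2 [ZMOD 3] := by
  simp only [Int.ModEq]
  omega

lemma not_modEq_add_two_of_modEq_add_one {x c : ℤ} (h : x ≡ c + 1 [ZMOD 3]) :
    ¬ x ≡ c + 2 [ZMOD 3] := by
  simp only [Int.ModEq] at h ⊢
  omega

lemma card_uncovered_eq_avoidCount_add_avoidCount {m : ι → ℕ}
    (hm : (s : Set ι).Pairwise (Nat.Coprime on m)) (h3 : ∀ i ∈ s, Nat.Coprime 3 (m i))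
    (c : ℤ) (a : ι → ℤ) :
    #((range (3 * ∏ i ∈ s, m i)).filter fun r : ℕ =>
        ¬ (r : ℤ) ≡ c [ZMOD 3] ∧ ∀ i ∈ s, ¬ (r : ℤ) ≡ a i [ZMOD 3 * m i])
      = avoidCount m s {i ∈ s | a i ≡ c + 1 [ZMOD 3]}
        + avoidCount m s {i ∈ s | a i ≡ c + 2 [ZMOD 3]} := by
  have hcount := card_filter_modEq_and_forall_not_modEq three_pos hm h3 (a := a)
  push_cast at hcount
  simp only [not_modEq_three_iff, or_and_right]
  rw [filter_or, card_union_of_disjoint, hcount, hcount]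
  exact disjoint_filter.2 fun r _ h₁ h₂ => not_modEq_add_two_of_modEq_add_one h₁.1 h₂.1

lemma avoidCount_add_avoidCount_sdiff (m : ι → ℕ) (h : t ⊆ s) :
    avoidCount m s t + avoidCount m s (s \ t)
      = (∏ i ∈ t, (m i - 1)) * (∏ i ∈ s \ t, m i)
        + (∏ i ∈ t, m i) * (∏ i ∈ s \ t, (m i - 1)) := by
  rw [avoidCount_eq_prod_mul_prod_sdiff m h, avoidCount_eq_prod_mul_prod_sdiff m sdiff_subset,
    Finset.sdiff_sdiff_eq_self h, mul_comm (∏ i ∈ s \ t, (m i - 1))]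

theorem min_uncovered_eq_min_over_partitions_general {m : ι → ℕ}
    (hm : (s : Set ι).Pairwise (Nat.Coprime on m)) (h3 : ∀ i ∈ s, Nat.Coprime 3 (m i)) :
    sInf {k : ℕ | ∃ (c : ℤ) (a : ι → ℤ),
        k = #((range (3 * ∏ i ∈ s, m i)).filter fun r : ℕ =>
          ¬ (r : ℤ) ≡ c [ZMOD 3] ∧ ∀ i ∈ s, ¬ (r : ℤ) ≡ a i [ZMOD 3 * m i])}
      = sInf {k : ℕ | ∃ t ⊆ s,
        k = (∏ i ∈ t, (m i - 1)) * (∏ i ∈ s \ t, m i)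
            + (∏ i ∈ t, m i) * (∏ i ∈ s \ t, (m i - 1))} := by
  simp only [card_uncovered_eq_avoidCount_add_avoidCount hm h3]
  refine csInf_eq_csInf_of_forall_exists_le ?_ ?_
  · rintro _ ⟨c, a, rfl⟩
    have h₂ : {i ∈ s | a i ≡ c + 2 [ZMOD 3]} ⊆ s \ {i ∈ s | a i ≡ c + 1 [ZMOD 3]} := by
      rw [← filter_not]
      exact monotone_filter_right s fun i _ hi h₁ => not_modEq_add_two_of_modEq_add_one h₁ hi
    exact ⟨_, ⟨_, filter_subset _ s, rfl⟩,
      (avoidCount_add_avoidCount_sdiff m (filter_subset _ s)).symm.trans_le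
        (Nat.add_le_add_left (avoidCount_anti m h₂) _)⟩
  · rintro _ ⟨t, ht, rfl⟩
    have h₁ : {i ∈ s | (if i ∈ t then 1 else 2 : ℤ) ≡ 0 + 1 [ZMOD 3]} = t := by
      ext i
      by_cases hi : i ∈ t <;> simp [hi, Int.ModEq, @ht i]
    have h₂ : {i ∈ s | (if i ∈ t then 1 else 2 : ℤ) ≡ 0 + 2 [ZMOD 3]} = s \ t := by
      ext i
      by_cases hi : i ∈ t <;> simp [hi, Int.ModEq]
    refine ⟨_, ⟨0, fun i => if i ∈ t then 1 else 2, rfl⟩, ?_⟩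
    rw [h₁, h₂, avoidCount_add_avoidCount_sdiff m ht]

end

open Finset in
/-- For moduli `{3} ∪ {3p : p ∈ P}`, the minimum number of uncovered residues modulo
`N = 3 * ∏ p ∈ P, p` over all choices of residues equals the minimum over partitions
`P = P₁ ⊔ P₂` of `∏_{P₁}(p-1) ∏_{P₂} p + ∏_{P₁} p ∏_{P₂}(p-1)`. -/
theorem min_uncovered_eq_min_over_partitions
    (P : Finset ℕ) (hP : ∀ p ∈ P, p.Prime) (h3 : 3 ∉ P)
    (N : ℕ) (hN : N = 3 * ∏ p ∈ P, p) :
    sInf {k : ℕ | ∃ (a₀ : ℤ) (a : ℕ → ℤ),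
        k = ((Finset.range N).filter fun r : ℕ =>
          ¬ (r : ℤ) ≡ a₀ [ZMOD 3] ∧ ∀ p ∈ P, ¬ (r : ℤ) ≡ a p [ZMOD 3 * p]).card}
      = sInf {k : ℕ | ∃ P₁ ⊆ P,
        k = (∏ p ∈ P₁, (p - 1)) * (∏ p ∈ P \ P₁, p)
            + (∏ p ∈ P₁, p) * (∏ p ∈ P \ P₁, (p - 1))} := by
  subst hN
  have hcoprime : (P : Set ℕ).Pairwise Nat.Coprime := fun p hp q hq hpq =>
    (Nat.coprime_primes (hP p hp) (hP q hq)).2 hpq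
  have hcoprime3 : ∀ p ∈ P, Nat.Coprime 3 p := fun p hp =>
    (Nat.coprime_primes Nat.prime_three (hP p hp)).2 (ne_of_mem_of_not_mem hp h3).symm
  exact min_uncovered_eq_min_over_partitions_general hcoprime hcoprime3
end

section
/- Let q be a prime and let b₁, ..., b_r be positive integers that are pairwise coprime and each coprime to q, and set N = q·∏_{i=1}^r b_i. Consider the moduli n_i = q·b_i for 1 ≤ i ≤ r. Then the minimum, over all choices of residues a_i (mod q·b_i), of the number of residues m with 0 ≤ m < N satisfying m ≢ a_i (mod q·b_i) for all i, equals (N/q) times the minimum, over all functions f : {1,...,r} → {1,...,q}, of ∑_{t=1}^{q} ∏_{i : f(i)=t} (1 − 1/b_i), where an empty product equals 1. -/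
/-!
Write `a i = s i + q * c i` and `m = t + q * k` with `0 ≤ s i, t < q`. Then `m ≡ a i [ZMOD q * b i]`
if and only if `t = s i` and `k ≡ c i [ZMOD b i]`, so within the class `t` modulo `q` the `i`-th
congruence acts only when `s i = t`, and it then removes one class modulo `b i`. By the Chinese
remainder theorem a proportion `∏ i with s i = t, (1 - 1 / b i)` of that class is left. Hence the
uncovered count depends on `a` only through the partition `s`, and every partition occurs.
-/

section

open Finset Function

theorem sInf_setOf_exists_eq {ι : Sort*} {α : Type*} [InfSet α] (u : ι → α) :
    sInf {x | ∃ i, x = u i} = ⨅ i, u i := by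
  simp only [iInf, Set.range, eq_comm]

theorem natCast_iInf {ι : Sort*} [Nonempty ι] (u : ι → ℕ) :
    ((⨅ i, u i : ℕ) : ℝ) = ⨅ i, (u i : ℝ) :=
  Nat.mono_cast.map_ciInf_of_continuousAt continuous_of_discreteTopology.continuousAt
    (OrderBot.bddBelow _)

theorem card_filter_range_mul_s2 (q n : ℕ) (p : ℕ → Prop) [DecidablePred p] :
    #{m ∈ range (q * n) | p m} = ∑ t : Fin q, #{k ∈ range n | p (t + q * k)} := by
  simp only [card_filter, sum_range]
  rw [sum_comm, ← Fintype.sum_prod_type',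
    ← (finProdFinEquiv.trans (finCongr (Nat.mul_comm n q))).sum_comp]
  simp

theorem add_mul_modEq_add_mul_iff {q : ℕ} (t s : Fin q) (k c b : ℤ) :
    (t + q * k : ℤ) ≡ s + q * c [ZMOD q * b] ↔ t = s ∧ k ≡ c [ZMOD b] := by
  have hq : (q : ℤ) ≠ 0 := mod_cast t.pos.ne'
  constructor
  · intro h
    have hts : t = s := by
      have h_mod : (t : ℤ) ≡ s [ZMOD q] := by simpa [Int.ModEq] using h.of_mul_right b
      exact Fin.ext ((Int.natCast_modEq_iff.mp h_mod).eq_of_lt_of_lt t.2 s.2)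
    subst hts
    exact ⟨rfl, (Int.ModEq.mul_left_cancel_iff' hq).mp (Int.ModEq.add_left_cancel' _ h)⟩
  · rintro ⟨rfl, h⟩
    exact h.mul_left'.add_left _

variable {ι : Type*} [Fintype ι] {b : ι → ℕ}

theorem card_filter_range_prod_forall_mem [∀ i, NeZero (b i)] (hcop : Pairwise (Nat.Coprime on b))
    (T : ∀ i, Finset (ZMod (b i))) :
    #{k ∈ range (∏ i, b i) | ∀ i, (k : ZMod (b i)) ∈ T i} = ∏ i, #(T i) := by
  classical
  have : NeZero (∏ i, b i) := ⟨prod_ne_zero_iff.mpr fun i _ ↦ NeZero.ne (b i)⟩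
  let crt := ZMod.prodEquivPi b hcop
  have crt_natCast (k : ℕ) : crt k = fun i ↦ (k : ZMod (b i)) := map_natCast crt k
  have natCast_val_crt_symm (y : ∀ i, ZMod (b i)) :
      (fun i ↦ ((crt.symm y).val : ZMod (b i))) = y := by
    rw [← crt_natCast, ZMod.natCast_zmod_val, crt.apply_symm_apply]
  rw [← Fintype.card_piFinset]
  refine card_nbij' (fun k i ↦ (k : ZMod (b i))) (fun y ↦ (crt.symm y).val) ?_ ?_ ?_ ?_
  · intro k hk
    simpa using (mem_filter.mp hk).2
  · intro y hy
    have hy_mem : ∀ i, y i ∈ T i := by simpa using hy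
    rw [← natCast_val_crt_symm y] at hy_mem
    exact mem_coe.mpr (mem_filter.mpr ⟨mem_range.mpr (ZMod.val_lt _), hy_mem⟩)
  · intro k hk
    have hk_lt : k < ∏ i, b i := mem_range.mp (mem_filter.mp hk).1
    simp only [← crt_natCast, crt.symm_apply_apply, ZMod.val_natCast_of_lt hk_lt]
  · exact fun y _ ↦ natCast_val_crt_symm y

theorem card_filter_range_prod_forall_not_modEq {K : Type*} [Field K] [CharZero K]
    (hb : ∀ i, 0 < b i) (hcop : Pairwise (Nat.Coprime on b)) (S : Finset ι) (c : ι → ℤ) :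
    (#{k ∈ range (∏ i, b i) | ∀ i ∈ S, ¬ ((k : ℕ) : ℤ) ≡ c i [ZMOD b i]} : K) =
      (∏ i, (b i : K)) * ∏ i ∈ S, (1 - 1 / (b i : K)) := by
  classical
  have (i : ι) : NeZero (b i) := ⟨(hb i).ne'⟩
  let T (i : ι) : Finset (ZMod (b i)) := if i ∈ S then {(c i : ZMod (b i))}ᶜ else univ
  have mem_T (k : ℕ) (i : ι) :
      (k : ZMod (b i)) ∈ T i ↔ (i ∈ S → ¬ (k : ℤ) ≡ c i [ZMOD b i]) := by
    by_cases hi : i ∈ S <;> simp [T, hi, ← ZMod.intCast_eq_intCast_iff]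
  have card_T (i : ι) : (#(T i) : K) = b i * if i ∈ S then 1 - 1 / (b i : K) else 1 := by
    have : (b i : K) ≠ 0 := Nat.cast_ne_zero.mpr (hb i).ne'
    by_cases hi : i ∈ S
    · simp [T, hi, card_compl, ZMod.card, Nat.cast_sub (hb i), mul_sub, this]
    · simp [T, hi, ZMod.card]
  simp only [← mem_T, card_filter_range_prod_forall_mem hcop T, Nat.cast_prod, card_T,
    prod_mul_distrib, prod_ite_mem, univ_inter]

theorem card_uncovered_eq_prod_mul_sum {K : Type*} [Field K] [CharZero K] {q : ℕ}
    (hb : ∀ i, 0 < b i) (hcop : Pairwise (Nat.Coprime on b)) (f : ι → Fin q) (c : ι → ℤ) :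
    (#{m ∈ range (q * ∏ i, b i) | ∀ i, ¬ ((m : ℕ) : ℤ) ≡ f i + q * c i [ZMOD q * b i]} : K) =
      (∏ i, (b i : K)) * ∑ t : Fin q, ∏ i with f i = t, (1 - 1 / (b i : K)) := by
  rw [card_filter_range_mul_s2, Nat.cast_sum, mul_sum]
  refine sum_congr rfl fun t _ ↦ ?_
  rw [← card_filter_range_prod_forall_not_modEq hb hcop _ c]
  simp only [Nat.cast_add, Nat.cast_mul, add_mul_modEq_add_mul_iff, not_and, mem_filter_univ,
    eq_comm]

theorem min_uncovered_eq_partition_formula_general {q : ℕ} (hq : 0 < q) (hb : ∀ i, 0 < b i)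
    (hcop : Pairwise (Nat.Coprime on b)) {N : ℕ} (hN : N = q * ∏ i, b i) :
    ((sInf {k : ℕ | ∃ a : ι → ℤ,
        k = #{m ∈ range N | ∀ i, ¬ ((m : ℕ) : ℤ) ≡ a i [ZMOD q * b i]}} : ℕ) : ℝ)
      = ((N : ℝ) / q) *
        sInf {v : ℝ | ∃ f : ι → Fin q,
          v = ∑ t : Fin q, ∏ i with f i = t, (1 - 1 / (b i : ℝ))} := by
  have : NeZero q := ⟨hq.ne'⟩
  have hNq : (N : ℝ) / q = ∏ i, (b i : ℝ) := by
    rw [hN, Nat.cast_mul, mul_div_cancel_left₀ _ (Nat.cast_ne_zero.mpr hq.ne'), Nat.cast_prod]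
  let divMod := Int.divModEquiv q
  have eq_mod_add_mul_div (x : ℤ) : x = (divMod x).2 + q * (divMod x).1 := by
    rw [add_comm, mul_comm]
    exact (divMod.symm_apply_apply x).symm
  let residues (a : ι → ℤ) (i : ι) : Fin q := (divMod (a i)).2
  have residues_surjective : Surjective residues :=
    (Prod.snd_surjective.comp divMod.surjective).comp_left
  rw [sInf_setOf_exists_eq, sInf_setOf_exists_eq, natCast_iInf, hNq,
    ← residues_surjective.iInf_comp, Real.mul_iInf_of_nonneg (by positivity)]
  refine iInf_congr fun a ↦ ?_
  rw [← card_uncovered_eq_prod_mul_sum hb hcop (residues a) (fun i ↦ (divMod (a i)).1), hN]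
  simp only [residues, ← eq_mod_add_mul_div]

end

open Finset in
/-- For moduli `n_i = q * b_i` with `q` prime and the `b_i` pairwise coprime and coprime
to `q`, the minimum number of uncovered residues modulo `N = q * ∏ b_i` equals `N/q` times
the minimum over all partitions of the index set into `q` parts (encoded by functions
`f : Fin r → Fin q`) of `∑_t ∏_{i : f i = t} (1 - 1/b_i)`. -/
theorem min_uncovered_eq_partition_formula
    (q : ℕ) (hq : q.Prime) (r : ℕ) (b : Fin r → ℕ)
    (hb : ∀ i, 0 < b i)
    (hcop : ∀ i j, i ≠ j → Nat.Coprime (b i) (b j))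
    (hcopq : ∀ i, Nat.Coprime (b i) q)
    (N : ℕ) (hN : N = q * ∏ i, b i) :
    ((sInf {k : ℕ | ∃ a : Fin r → ℤ,
        k = ((Finset.range N).filter fun m : ℕ =>
          ∀ i, ¬ (m : ℤ) ≡ a i [ZMOD q * b i]).card} : ℕ) : ℝ)
      = ((N : ℝ) / q) *
        sInf {v : ℝ | ∃ f : Fin r → Fin q,
          v = ∑ t : Fin q, ∏ i ∈ Finset.univ.filter fun i => f i = t, (1 - 1 / (b i : ℝ))} := by
  -- The two filters carry different decidability instances: one for `Fin r`, one for any `Fintype`.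
  convert min_uncovered_eq_partition_formula_general hq.pos hb hcop hN
end

section
/- Let p₁, ..., p_n be distinct primes and let I, J ⊆ {1,...,n} be disjoint subsets, not both empty. Then ∏_{i∈I}(1 − 1/p_i) ≠ ∏_{j∈J}(1 − 1/p_j) (as rational numbers), where an empty product equals 1; equivalently, ∏_{i∈I}(p_i − 1)·∏_{j∈J} p_j ≠ ∏_{j∈J}(p_j − 1)·∏_{i∈I} p_i. -/
/-!
Cancel the common factors of the two products and let `q` be the largest prime that remains, say
on the left. After clearing denominators `q` divides the right-hand side. It does not divide the
left-hand side: it differs from all the primes of the other product, and it is larger than `p - 1`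
for every `p ≤ q`.
-/

theorem prod_sdiff_eq_prod_sdiff_iff_of_forall_ne_zero {ι M : Type*} [DecidableEq ι]
    [CommMonoidWithZero M] [IsCancelMulZero M] {f : ι → M} {s t : Finset ι}
    (hf : ∀ i ∈ s ∩ t, f i ≠ 0) :
    ∏ i ∈ s \ t, f i = ∏ i ∈ t \ s, f i ↔ ∏ i ∈ s, f i = ∏ i ∈ t, f i := by
  nontriviality M
  have hcommon : ∏ i ∈ s ∩ t, f i ≠ 0 := Finset.prod_ne_zero_iff.2 hf
  rw [← Finset.prod_inter_mul_prod_sdiff s t f, ← Finset.prod_inter_mul_prod_sdiff t s f,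
    Finset.inter_comm t s, mul_right_inj' hcommon]

theorem not_dvd_prod_sub_one_of_forall_le {q : ℕ} (hq : q.Prime) {s : Finset ℕ}
    (hs : ∀ p ∈ s, 1 < p) (hle : ∀ p ∈ s, p ≤ q) : ¬ q ∣ ∏ p ∈ s, (p - 1) :=
  hq.prime.not_dvd_finsetProd fun p hp =>
    Nat.not_dvd_of_pos_of_lt (Nat.sub_pos_of_lt (hs p hp))
      (Nat.sub_one_lt_of_le (Nat.zero_lt_of_lt (hs p hp)) (hle p hp))

theorem not_dvd_prod_primes_of_notMem {q : ℕ} (hq : q.Prime) {s : Finset ℕ}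
    (hs : ∀ p ∈ s, p.Prime) (hqs : q ∉ s) : ¬ q ∣ ∏ p ∈ s, p :=
  hq.prime.not_dvd_finsetProd fun p hp hqp =>
    ne_of_mem_of_not_mem hp hqs ((Nat.prime_dvd_prime_iff_eq hq (hs p hp)).1 hqp).symm

theorem prod_sub_one_mul_prod_ne_of_forall_le {s t : Finset ℕ} (hs : ∀ p ∈ s, p.Prime)
    (ht : ∀ p ∈ t, p.Prime) {q : ℕ} (hqs : q ∈ s) (hqt : q ∉ t) (hle : ∀ p ∈ s, p ≤ q) :
    (∏ p ∈ s, (p - 1)) * (∏ p ∈ t, p) ≠ (∏ p ∈ t, (p - 1)) * (∏ p ∈ s, p) := by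
  intro heq
  have hq : q.Prime := hs q hqs
  have hdvd : q ∣ (∏ p ∈ s, (p - 1)) * (∏ p ∈ t, p) :=
    heq ▸ (Finset.dvd_prod_of_mem (fun p => p) hqs).mul_left _
  rcases hq.dvd_mul.1 hdvd with hsub | hprod
  · exact not_dvd_prod_sub_one_of_forall_le hq (fun p hp => (hs p hp).one_lt) hle hsub
  · exact not_dvd_prod_primes_of_notMem hq ht hqt hprod

section EulerFactors

variable (K : Type*) [Field K] [CharZero K] {s t : Finset ℕ}

theorem prod_one_sub_inv_eq_div (hs : ∀ p ∈ s, 0 < p) :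
    ∏ p ∈ s, (1 - 1 / (p : K)) = ((∏ p ∈ s, (p - 1) : ℕ) : K) / ((∏ p ∈ s, p : ℕ) : K) := by
  rw [Nat.cast_prod, Nat.cast_prod, ← Finset.prod_div_distrib]
  refine Finset.prod_congr rfl fun p hp => ?_
  have hp_ne_zero : (p : K) ≠ 0 := Nat.cast_ne_zero.2 (hs p hp).ne'
  rw [Nat.cast_pred (hs p hp), one_sub_div hp_ne_zero]

theorem prod_one_sub_inv_eq_iff (hs : ∀ p ∈ s, 0 < p) (ht : ∀ p ∈ t, 0 < p) :
    ∏ p ∈ s, (1 - 1 / (p : K)) = ∏ p ∈ t, (1 - 1 / (p : K)) ↔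
      (∏ p ∈ s, (p - 1)) * (∏ p ∈ t, p) = (∏ p ∈ t, (p - 1)) * (∏ p ∈ s, p) := by
  have cast_prod_ne_zero {u : Finset ℕ} (hu : ∀ p ∈ u, 0 < p) : ((∏ p ∈ u, p : ℕ) : K) ≠ 0 :=
    Nat.cast_ne_zero.2 (Finset.prod_pos hu).ne'
  rw [prod_one_sub_inv_eq_div K hs, prod_one_sub_inv_eq_div K ht,
    div_eq_div_iff (cast_prod_ne_zero hs) (cast_prod_ne_zero ht)]
  norm_cast

theorem one_sub_inv_natCast_ne_zero {p : ℕ} (hp : p ≠ 1) : 1 - 1 / (p : K) ≠ 0 := by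
  rw [one_div, sub_ne_zero, ne_comm, inv_ne_one]
  exact Nat.cast_ne_one.2 hp

theorem prod_one_sub_inv_ne_of_forall_sdiff_le (hs : ∀ p ∈ s, p.Prime) (ht : ∀ p ∈ t, p.Prime)
    {q : ℕ} (hq : q ∈ s \ t) (hle : ∀ p ∈ s \ t, p ≤ q) :
    ∏ p ∈ s, (1 - 1 / (p : K)) ≠ ∏ p ∈ t, (1 - 1 / (p : K)) := by
  have hst : ∀ p ∈ s \ t, p.Prime := fun p hp => hs p (Finset.mem_sdiff.1 hp).1
  have hts : ∀ p ∈ t \ s, p.Prime := fun p hp => ht p (Finset.mem_sdiff.1 hp).1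
  have hq_notMem : q ∉ t \ s := Finset.disjoint_left.1 disjoint_sdiff_sdiff hq
  have hcommon : ∀ p ∈ s ∩ t, 1 - 1 / (p : K) ≠ 0 := fun p hp =>
    one_sub_inv_natCast_ne_zero K (hs p (Finset.mem_inter.1 hp).1).ne_one
  rw [Ne, ← prod_sdiff_eq_prod_sdiff_iff_of_forall_ne_zero hcommon,
    prod_one_sub_inv_eq_iff K (fun p hp => (hst p hp).pos) (fun p hp => (hts p hp).pos)]
  exact prod_sub_one_mul_prod_ne_of_forall_le hst hts hq hq_notMem hle

theorem prod_one_sub_inv_ne_of_disjoint_general (hs : ∀ p ∈ s, p.Prime) (ht : ∀ p ∈ t, p.Prime)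
    (hst : s ≠ t) :
    ∏ p ∈ s, (1 - 1 / (p : K)) ≠ ∏ p ∈ t, (1 - 1 / (p : K)) ∧
      (∏ p ∈ s, (p - 1)) * (∏ p ∈ t, p) ≠ (∏ p ∈ t, (p - 1)) * (∏ p ∈ s, p) := by
  have hcross :=
    prod_one_sub_inv_eq_iff K (fun p hp => (hs p hp).pos) (fun p hp => (ht p hp).pos)
  rw [Ne, Ne, ← hcross, and_self]
  have hnonempty : (s \ t ∪ t \ s).Nonempty := Finset.symmDiff_nonempty.2 hst
  obtain ⟨q, hq, hmax⟩ := Finset.exists_max_image _ id hnonempty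
  rcases Finset.mem_union.1 hq with hq_left | hq_right
  · exact prod_one_sub_inv_ne_of_forall_sdiff_le K hs ht hq_left fun p hp =>
      hmax p (Finset.mem_union_left _ hp)
  · exact (prod_one_sub_inv_ne_of_forall_sdiff_le K ht hs hq_right fun p hp =>
      hmax p (Finset.mem_union_right _ hp)).symm

end EulerFactors

open Finset in
/-- Disjoint, not-both-empty subsets of a family of distinct primes give distinct values of
`∏ (1 - 1/p)`; equivalently `∏_{I}(p_i - 1) ∏_{J} p_j ≠ ∏_{J}(p_j - 1) ∏_{I} p_i`. -/
theorem prod_one_sub_inv_ne_of_disjoint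
    (n : ℕ) (p : Fin n → ℕ) (hp : ∀ i, (p i).Prime) (hinj : Function.Injective p)
    (I J : Finset (Fin n)) (hdisj : Disjoint I J) (hne : (I ∪ J).Nonempty) :
    (∏ i ∈ I, (1 - 1 / (p i : ℚ))) ≠ (∏ j ∈ J, (1 - 1 / (p j : ℚ))) ∧
    (∏ i ∈ I, (p i - 1)) * (∏ j ∈ J, p j) ≠ (∏ j ∈ J, (p j - 1)) * (∏ i ∈ I, p i) := by
  have hIJ : I ≠ J := by rintro rfl; exact (union_self I ▸ hne).ne_empty (disjoint_self.1 hdisj)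
  simpa using prod_one_sub_inv_ne_of_disjoint_general ℚ (s := I.map ⟨p, hinj⟩)
    (t := J.map ⟨p, hinj⟩) (by simp [hp]) (by simp [hp]) ((map_injective _).ne hIJ)
end

section
/- Let p₁, ..., p_n be distinct primes (n ≥ 1) and let w_i = −log(1 − 1/p_i). Then ε := min{ |∑_{i∈I} w_i − ∑_{j∈J} w_j| : I, J ⊆ {1,...,n} disjoint and not both empty } is strictly positive. -/
/-!
A vanishing gap is an integer relation `∑ cᵢ log (1 - 1/pᵢ) = 0`, that is,
`∏ (1 - 1/pᵢ) ^ cᵢ = 1`. If some `cᵢ` were nonzero, let `q` be the largest `pᵢ` with this property: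
it cannot divide `pᵢ - 1` for any `pᵢ ≤ q`, so it occurs on the left only in the denominator of
`1 - 1/q`, and taking `q`-adic valuations shows that its exponent is zero, a contradiction.
Hence the weights are linearly independent over `ℤ`, distinct subsets have distinct sums, and the
minimum is over finitely many positive numbers.
-/

theorem injective_finset_sum_of_linearIndependent {ι R M : Type*} [Semiring R]
    [Nontrivial R] [AddCommMonoid M] [Module R M] {v : ι → M} (hv : LinearIndependent R v) :
    Function.Injective fun I : Finset ι => ∑ i ∈ I, v i := by
  classical
  intro I J hIJ
  have indicators_eq := linearIndependent_iff'ₛ.1 hv (I ∪ J)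
    (fun i => if i ∈ I then 1 else 0) (fun i => if i ∈ J then 1 else 0)
    (by simpa [Finset.union_inter_cancel_left, Finset.union_inter_cancel_right] using hIJ)
  ext i
  by_cases hi : i ∈ I ∪ J
  · have := indicators_eq i hi
    by_cases hI : i ∈ I <;> by_cases hJ : i ∈ J <;> simp_all
  · simp_all

section PadicValuation

variable {ι : Type*} {q : ℕ} [Fact q.Prime]

theorem padicValRat_prod {s : Finset ι} {x : ι → ℚ} (hx : ∀ i ∈ s, x i ≠ 0) :
    padicValRat q (∏ i ∈ s, x i) = ∑ i ∈ s, padicValRat q (x i) := by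
  induction s using Finset.cons_induction with
  | empty => simp
  | cons i s hi ih =>
    rw [Finset.forall_mem_cons] at hx
    rw [Finset.prod_cons, Finset.sum_cons,
      padicValRat.mul hx.1 (Finset.prod_ne_zero_iff.2 hx.2), ih hx.2]

theorem sum_mul_padicValRat_eq_zero_of_sum_mul_log_eq_zero {s : Finset ι} {x : ι → ℚ}
    (hx : ∀ i ∈ s, x i ≠ 0) {c : ι → ℤ} (hlog : ∑ i ∈ s, c i * Real.log (x i) = 0) :
    ∑ i ∈ s, c i * padicValRat q (x i) = 0 := by
  have hpow : ∀ i ∈ s, x i ^ c i ≠ 0 := fun i hi => zpow_ne_zero _ (hx i hi)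
  have log_prod_eq_zero : Real.log ((∏ i ∈ s, x i ^ c i : ℚ) : ℝ) = 0 := by
    rw [Rat.cast_prod, Real.log_prod fun i hi => Rat.cast_ne_zero.2 (hpow i hi)]
    simpa only [Rat.cast_zpow, Real.log_zpow] using hlog
  have prod_eq : ∏ i ∈ s, x i ^ c i = 1 ∨ ∏ i ∈ s, x i ^ c i = -1 := by
    have := (Real.log_eq_zero.1 log_prod_eq_zero).resolve_left
      (Rat.cast_ne_zero.2 (Finset.prod_ne_zero_iff.2 hpow))
    exact_mod_cast this
  calc ∑ i ∈ s, c i * padicValRat q (x i)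
      = padicValRat q (∏ i ∈ s, x i ^ c i) := by
        simp only [padicValRat_prod hpow, padicValRat.zpow]
    _ = 0 := by rcases prod_eq with h | h <;> simp [h]

theorem padicValRat_one_sub_inv {m : ℕ} (hm : 1 < m) :
    padicValRat q (1 - (m : ℚ)⁻¹) = padicValNat q (m - 1) - padicValNat q m := by
  have hm₀ : (m : ℚ) ≠ 0 := by positivity
  have hm₁ : ((m - 1 : ℕ) : ℚ) ≠ 0 := by exact_mod_cast (Nat.sub_pos_of_lt hm).ne'
  have : 1 - (m : ℚ)⁻¹ = (m - 1 : ℕ) / m := by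
    rw [Nat.cast_pred (by positivity)]
    field_simp
  rw [this, padicValRat.div hm₁ hm₀, padicValRat.of_nat, padicValRat.of_nat]

theorem padicValRat_one_sub_inv_of_lt {m : ℕ} (hm : 1 < m) (hmq : m < q) :
    padicValRat q (1 - (m : ℚ)⁻¹) = 0 := by
  rw [padicValRat_one_sub_inv hm,
    padicValNat.eq_zero_of_not_dvd (Nat.not_dvd_of_pos_of_lt (by lia) (by lia)),
    padicValNat.eq_zero_of_not_dvd (Nat.not_dvd_of_pos_of_lt (by lia) hmq), sub_self]

theorem padicValRat_one_sub_inv_self : padicValRat q (1 - (q : ℚ)⁻¹) = -1 := by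
  have hq : 1 < q := (Fact.out : q.Prime).one_lt
  rw [padicValRat_one_sub_inv hq, padicValNat_self,
    padicValNat.eq_zero_of_not_dvd (Nat.not_dvd_of_pos_of_lt (by lia) (by lia))]
  rfl

end PadicValuation

theorem linearIndependent_log_one_sub_inv_prime {ι : Type*} {p : ι → ℕ} (hp : ∀ i, (p i).Prime)
    (hinj : Function.Injective p) :
    LinearIndependent ℤ fun i => Real.log (1 - (p i : ℝ)⁻¹) := by
  rw [linearIndependent_iff']
  intro s c hc
  by_contra! hnonzero
  obtain ⟨k, hk, hmax⟩ := (s.filter (c · ≠ 0)).exists_max_image p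
    (Finset.filter_nonempty_iff.2 hnonzero)
  obtain ⟨hks, hck⟩ := Finset.mem_filter.1 hk
  have : Fact (p k).Prime := ⟨hp k⟩
  have hne : ∀ i ∈ s, 1 - (p i : ℚ)⁻¹ ≠ 0 := fun i _ =>
    sub_ne_zero.2 (inv_ne_one.2 (Nat.cast_ne_one.2 (hp i).ne_one)).symm
  have valuation_sum : ∑ i ∈ s, c i * padicValRat (p k) (1 - (p i : ℚ)⁻¹) = 0 :=
    sum_mul_padicValRat_eq_zero_of_sum_mul_log_eq_zero hne (by simpa using hc)
  have other_terms : ∀ i ∈ s, i ≠ k → c i * padicValRat (p k) (1 - (p i : ℚ)⁻¹) = 0 := by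
    intro i hi hik
    by_cases hci : c i = 0
    · rw [hci, zero_mul]
    · have hlt : p i < p k :=
        (hmax i (Finset.mem_filter.2 ⟨hi, hci⟩)).lt_of_ne (hinj.ne hik)
      rw [padicValRat_one_sub_inv_of_lt (hp i).one_lt hlt, mul_zero]
  rw [Finset.sum_eq_single_of_mem k hks other_terms, padicValRat_one_sub_inv_self] at valuation_sum
  exact hck (by simpa using valuation_sum)

theorem min_weight_gap_pos_general {ι : Type*} [Finite ι] [Nonempty ι] [DecidableEq ι] {w : ι → ℝ}
    (hw : LinearIndependent ℤ w) :
    0 < sInf {d : ℝ | ∃ I J : Finset ι, Disjoint I J ∧ (I ∪ J).Nonempty ∧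
        d = |∑ i ∈ I, w i - ∑ j ∈ J, w j|} := by
  refine (Set.Finite.lt_csInf_iff ?finite ?nonempty).2 ?positive
  case finite =>
    refine (Set.finite_range fun S : Finset ι × Finset ι =>
      |∑ i ∈ S.1, w i - ∑ j ∈ S.2, w j|).subset ?_
    rintro _ ⟨I, J, -, -, rfl⟩
    exact ⟨(I, J), rfl⟩
  case nonempty =>
    exact ⟨_, {Classical.arbitrary ι}, ∅, Finset.disjoint_empty_right _, by simp, rfl⟩
  case positive =>
    rintro _ ⟨I, J, hdisj, hne, rfl⟩
    rw [abs_pos, sub_ne_zero]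
    intro hsum
    obtain rfl : I = J := injective_finset_sum_of_linearIndependent hw hsum
    simp [disjoint_self.1 hdisj] at hne

open Finset in
/-- For distinct primes `p₁, …, pₙ` (`n ≥ 1`) and weights `wᵢ = -log(1 - 1/pᵢ)`, the minimum
of `|∑_{i ∈ I} wᵢ - ∑_{j ∈ J} wⱼ|` over disjoint subsets `I, J` of `{1, …, n}` that are not
both empty is strictly positive. -/
theorem min_weight_gap_pos
    (n : ℕ) (hn : 1 ≤ n) (p : Fin n → ℕ) (hp : ∀ i, (p i).Prime)
    (hinj : Function.Injective p)
    (w : Fin n → ℝ) (hw : ∀ i, w i = -Real.log (1 - 1 / (p i : ℝ))) :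
    0 < sInf {d : ℝ | ∃ I J : Finset (Fin n), Disjoint I J ∧ (I ∪ J).Nonempty ∧
        d = |∑ i ∈ I, w i - ∑ j ∈ J, w j|} := by
  have : Nonempty (Fin n) := ⟨⟨0, hn⟩⟩
  have hw_neg : w = -fun i => Real.log (1 - (p i : ℝ)⁻¹) := by ext i; simp [hw]
  exact min_weight_gap_pos_general (hw_neg ▸ (linearIndependent_log_one_sub_inv_prime hp hinj).neg)
end

section
/- With the construction below, for all indices i, j with 1 ≤ i, j ≤ n one has a_i < 3·a_j; that is, the maximum of the a_i is less than three times the minimum. -/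
/-!
If two numbers satisfy `u ≤ 2 * v`, their integer parts satisfy `⌊u⌋ ≤ 2 * ⌊v⌋ + 1`, so once
`⌊v⌋ ≥ 3` multiplying both by `c ≥ 1` and adding `1` to either one keeps the ratio below `3`.

With `u = w i * x` and `v = w j * x`, the bound `x > 4 * n / ε` makes all these numbers at least
`3`, since `ε` is at most each weight (take `I = {i}` and `J = ∅`), provided that `ε` is positive.
This is where the primes come in. If two disjoint sets of weights, not both empty, had the same
sum, then exponentiating would give `∏_I (1 - 1 / p) = ∏_J (1 - 1 / p)`. But the largest prime
involved divides the denominator of exactly one side and none of the numbers `p - 1`.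
-/

section Rounding

variable {R : Type*} [Semiring R] [LinearOrder R] [IsStrictOrderedRing R] [FloorSemiring R]

theorem floor_le_two_mul_floor_add_one {u v : R} (h : u ≤ 2 * v) : ⌊u⌋₊ ≤ 2 * ⌊v⌋₊ + 1 := by
  suffices hlt : ⌊u⌋₊ < 2 * (⌊v⌋₊ + 1) by lia
  rw [Nat.floor_lt' (by lia)]
  push_cast
  calc
    u ≤ 2 * v := h
    _ < 2 * (⌊v⌋₊ + 1) := by gcongr; exact Nat.lt_floor_add_one v

theorem lcm_floor_pos {ι : Type*} {S : Finset ι} {u : ι → R} (hu : ∀ i ∈ S, 1 ≤ u i) :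
    0 < S.lcm fun i => ⌊u i⌋₊ := by
  rw [Nat.pos_iff_ne_zero, Finset.lcm_ne_zero_iff]
  exact fun i hi => (Nat.floor_pos.2 (hu i hi)).ne'

theorem mul_floor_add_one_lt_three_mul {u v : R} {c : ℕ} (hc : 0 < c) (huv : u ≤ 2 * v)
    (hv : 3 ≤ v) : c * ⌊u⌋₊ + 1 < 3 * (c * ⌊v⌋₊) := by
  have hfloor : 3 ≤ ⌊v⌋₊ := Nat.le_floor (mod_cast hv)
  calc
    c * ⌊u⌋₊ + 1 ≤ c * (2 * ⌊v⌋₊ + 1) + 1 := by grw [floor_le_two_mul_floor_add_one huv]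
    _ < c * (2 * ⌊v⌋₊) + c * 3 := by lia
    _ ≤ c * (2 * ⌊v⌋₊) + c * ⌊v⌋₊ := by gcongr
    _ = 3 * (c * ⌊v⌋₊) := by ring

end Rounding

section SubsetSums

variable {ι G : Type*} [DecidableEq ι] [AddCommGroup G] [LinearOrder G]

/-- The gaps `|∑_I w - ∑_J w|` between sums of `w` over disjoint sets of indices `I` and `J`, not
both empty. Chvátal's `ε` is the least of them. -/
def subsetSumGaps (w : ι → G) : Set G :=
  {d | ∃ I J : Finset ι, Disjoint I J ∧ (I ∪ J).Nonempty ∧ d = |∑ i ∈ I, w i - ∑ j ∈ J, w j|}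

theorem abs_mem_subsetSumGaps (w : ι → G) (i : ι) : |w i| ∈ subsetSumGaps w :=
  ⟨{i}, ∅, by simp⟩

theorem pos_of_mem_subsetSumGaps [IsOrderedAddMonoid G] {w : ι → G}
    (hw : ∀ I J : Finset ι, Disjoint I J → (I ∪ J).Nonempty → ∑ i ∈ I, w i ≠ ∑ j ∈ J, w j)
    {d : G} (hd : d ∈ subsetSumGaps w) : 0 < d := by
  obtain ⟨I, J, hdisj, hne, rfl⟩ := hd
  exact abs_pos.2 (sub_ne_zero.2 (hw I J hdisj hne))

end SubsetSums

section PrimeProducts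

variable {ι : Type*} {p : ι → ℕ}

theorem not_dvd_prod_sub_one {q : ℕ} (hq : q.Prime) {S : Finset ι} (hp : ∀ k ∈ S, 1 < p k)
    (hle : ∀ k ∈ S, p k ≤ q) : ¬q ∣ ∏ k ∈ S, (p k - 1) := by
  refine hq.prime.not_dvd_finsetProd fun k hk => Nat.not_dvd_of_pos_of_lt ?_ ?_
  · exact Nat.sub_pos_of_lt (hp k hk)
  · exact (Nat.sub_one_lt_of_lt (hp k hk)).trans_le (hle k hk)

theorem not_dvd_prod_of_notMem (hp : ∀ i, (p i).Prime) (hinj : Function.Injective p)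
    {S : Finset ι} {i : ι} (hi : i ∉ S) : ¬p i ∣ ∏ k ∈ S, p k := by
  refine (hp i).prime.not_dvd_finsetProd fun k hk hdvd => hi ?_
  rwa [hinj ((Nat.prime_dvd_prime_iff_eq (hp i) (hp k)).1 hdvd)]

theorem prod_sub_one_mul_prod_ne [DecidableEq ι] (hp : ∀ i, (p i).Prime)
    (hinj : Function.Injective p) {I J : Finset ι} (hdisj : Disjoint I J)
    (hne : (I ∪ J).Nonempty) :
    (∏ k ∈ I, (p k - 1)) * ∏ k ∈ J, p k ≠ (∏ k ∈ J, (p k - 1)) * ∏ k ∈ I, p k := by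
  obtain ⟨i, hi, hmax⟩ := Finset.exists_max_image (I ∪ J) p hne
  wlog hiI : i ∈ I generalizing I J
  · have hiJ : i ∈ J := (Finset.mem_union.1 hi).resolve_left hiI
    rw [Finset.union_comm] at hne hi hmax
    exact (this hdisj.symm hne hi hmax hiJ).symm
  have hdvd : p i ∣ (∏ k ∈ J, (p k - 1)) * ∏ k ∈ I, p k :=
    (Finset.dvd_prod_of_mem p hiI).mul_left _
  have hI : ¬p i ∣ ∏ k ∈ I, (p k - 1) :=
    not_dvd_prod_sub_one (hp i) (fun k _ => (hp k).one_lt)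
      fun k hk => hmax k (Finset.mem_union_left J hk)
  have hJ : ¬p i ∣ ∏ k ∈ J, p k :=
    not_dvd_prod_of_notMem hp hinj (Finset.disjoint_left.1 hdisj hiI)
  intro heq
  exact (hp i).prime.not_dvd_mul hI hJ (heq ▸ hdvd)

end PrimeProducts

section EulerWeight

/-- The weight of a prime `q` in Chvátal's construction, the logarithm of the Euler factor
`(1 - 1 / q)⁻¹`; for `q ≤ 1` it has the junk value `0`. -/
noncomputable def eulerWeight (q : ℕ) : ℝ :=
  -Real.log (1 - 1 / (q : ℝ))

theorem exp_neg_eulerWeight {q : ℕ} (hq : 1 < q) :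
    Real.exp (-eulerWeight q) = ((q - 1 : ℕ) : ℝ) / q := by
  have hq' : (1 : ℝ) < q := mod_cast hq
  have hpos : 0 < 1 - 1 / (q : ℝ) := by
    rw [sub_pos, div_lt_one] <;> linarith
  rw [eulerWeight, neg_neg, Real.exp_log hpos, Nat.cast_pred (by lia)]
  field_simp

theorem eulerWeight_pos {q : ℕ} (hq : 1 < q) : 0 < eulerWeight q := by
  rw [← neg_lt_zero, ← Real.exp_lt_one_iff, exp_neg_eulerWeight hq, div_lt_one (by positivity)]
  exact_mod_cast Nat.sub_one_lt_of_lt hq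

variable {ι : Type*} {p : ι → ℕ}

theorem exp_neg_sum_eulerWeight {S : Finset ι} (hp : ∀ k ∈ S, 1 < p k) :
    Real.exp (-∑ k ∈ S, eulerWeight (p k)) =
      ((∏ k ∈ S, (p k - 1) : ℕ) : ℝ) / (∏ k ∈ S, p k : ℕ) := by
  rw [← Finset.sum_neg_distrib, Real.exp_sum, Nat.cast_prod, Nat.cast_prod,
    ← Finset.prod_div_distrib]
  exact Finset.prod_congr rfl fun k hk => exp_neg_eulerWeight (hp k hk)

theorem sum_eulerWeight_ne_sum_eulerWeight [DecidableEq ι] (hp : ∀ i, (p i).Prime)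
    (hinj : Function.Injective p) {I J : Finset ι} (hdisj : Disjoint I J)
    (hne : (I ∪ J).Nonempty) :
    ∑ i ∈ I, eulerWeight (p i) ≠ ∑ j ∈ J, eulerWeight (p j) := by
  intro hsum
  have hprod (S : Finset ι) : ((∏ k ∈ S, p k : ℕ) : ℝ) ≠ 0 :=
    Nat.cast_ne_zero.2 (Finset.prod_ne_zero_iff.2 fun k _ => (hp k).ne_zero)
  have hexp := congrArg (fun t => Real.exp (-t)) hsum
  rw [exp_neg_sum_eulerWeight fun k _ => (hp k).one_lt,
    exp_neg_sum_eulerWeight fun k _ => (hp k).one_lt,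
    div_eq_div_iff (hprod I) (hprod J)] at hexp
  exact prod_sub_one_mul_prod_ne hp hinj hdisj hne (mod_cast hexp)

end EulerWeight

theorem chvatal_ratio_lt_three_general {ι R : Type*} [Semiring R] [LinearOrder R]
    [IsStrictOrderedRing R] [FloorSemiring R] {w : ι → R} {x : R}
    (hratio : ∀ i j, w i ≤ 2 * w j) (hwx : ∀ i, 3 ≤ w i * x) {c : ℕ} (hc : 0 < c) {a : ι → ℕ}
    (ha : ∀ i, a i = c * ⌊w i * x⌋₊ ∨ a i = c * ⌊w i * x⌋₊ + 1) (i j : ι) : a i < 3 * a j := by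
  have hw : 0 ≤ w j := by
    simpa [two_mul] using hratio j j
  have hx : 0 ≤ x := le_of_not_gt fun hx =>
    (mul_nonpos_of_nonneg_of_nonpos hw hx.le).not_gt (three_pos.trans_le (hwx j))
  have huv : w i * x ≤ 2 * (w j * x) := by
    grw [hratio i j, mul_assoc]
  calc
    a i ≤ c * ⌊w i * x⌋₊ + 1 := by grind
    _ < 3 * (c * ⌊w j * x⌋₊) := mul_floor_add_one_lt_three_mul hc huv (hwx j)
    _ ≤ 3 * a j := by grind

open Finset in
/-- In Chvátal's construction, every `aᵢ` is less than three times every `aⱼ`. -/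
theorem chvatal_ratio_lt_three
    (n : ℕ) (hn : 1 ≤ n)
    (p : Fin n → ℕ) (hp : ∀ i, (p i).Prime) (hinj : Function.Injective p)
    (w : Fin n → ℝ) (hw : ∀ i, w i = -Real.log (1 - 1 / (p i : ℝ)))
    (hmono : ∀ i j : Fin n, i ≤ j → w j ≤ w i)
    (hratio : w ⟨0, by omega⟩ ≤ 2 * w ⟨n - 1, by omega⟩)
    (ε : ℝ)
    (hε : IsLeast {d : ℝ | ∃ I J : Finset (Fin n), Disjoint I J ∧ (I ∪ J).Nonempty ∧
        d = |∑ i ∈ I, w i - ∑ j ∈ J, w j|} ε)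
    (x : ℝ) (hx : 4 * n / ε < x)
    (c : ℕ)
    (hc : c = ((Finset.univ : Finset (Fin n)).filter fun i : Fin n => (i : ℕ) < n / 2).lcm
        fun i => (⌊w i * x⌋).toNat)
    (a : Fin n → ℕ)
    (ha : ∀ i : Fin n, a i = if (i : ℕ) < n / 2 then c * (⌊w i * x⌋).toNat
        else c * (⌊w i * x⌋).toNat + 1)
    : ∀ i j : Fin n, a i < 3 * a j := by
  obtain rfl : w = fun i => eulerWeight (p i) := funext hw
  simp only [Int.floor_toNat] at hc ha
  have hε_pos : 0 < ε :=
    pos_of_mem_subsetSumGaps (fun _ _ => sum_eulerWeight_ne_sum_eulerWeight hp hinj) hε.1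
  have hε_le (i : Fin n) : ε ≤ eulerWeight (p i) :=
    (hε.2 (abs_mem_subsetSumGaps _ i)).trans_eq (abs_of_pos (eulerWeight_pos (hp i).one_lt))
  have hx_pos : 0 < x := hx.trans_le' (by positivity)
  have hwx (i : Fin n) : 3 ≤ eulerWeight (p i) * x := calc
    (3 : ℝ) ≤ 4 * n := by norm_cast; lia
    _ ≤ ε * x := ((div_lt_iff₀' hε_pos).1 hx).le
    _ ≤ eulerWeight (p i) * x := by grw [hε_le i]
  have hpairs (i j : Fin n) : eulerWeight (p i) ≤ 2 * eulerWeight (p j) := calc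
    eulerWeight (p i) ≤ eulerWeight (p ⟨0, by lia⟩) := hmono _ i (Nat.zero_le _)
    _ ≤ 2 * eulerWeight (p ⟨n - 1, by lia⟩) := hratio
    _ ≤ 2 * eulerWeight (p j) := by gcongr; exact hmono j _ (Nat.le_sub_one_of_lt j.isLt)
  have hc_pos : 0 < c := hc ▸ lcm_floor_pos fun i _ => by linarith [hwx i]
  exact chvatal_ratio_lt_three_general hpairs hwx hc_pos fun i => by grind
end

section
/- With the construction below, for every subset I ⊆ {1,...,n} with 10·|I| ≤ n, one has ∑_{i∈I} a_i < (1/2)·∑_{i=1}^{n} a_i (Chvátal's condition (a)). -/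
/-!
Up to the factor `c` and the unit added on the second half of the indices, `a i` is `⌊w i * x⌋`.
Any two weights differ at most by a factor `2`, so `⌊w i * x⌋ ≤ 2 * ⌊w j * x⌋ + 1`. If all these
floors are positive, any two of them differ at most by a factor `3`, so the floors over fewer than
a quarter of the indices sum to no more than the remaining ones. If one of them vanishes, all are
at most `1`; then either `c = 0`, or the floors on the first half divide `c ≠ 0`, hence all equal
`1` and already outweigh those over `I`. In every case the strict inequality comes from the added
units.
-/

section

open Finset

variable {ι : Type*}

theorem sum_le_sum_of_forall_le_mul {κ R : Type*} [CommSemiring R] [LinearOrder R]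
    [IsStrictOrderedRing R] {s : Finset ι} {t : Finset κ} {f : ι → R} {g : κ → R} {K : R}
    (hK : 0 < K) (hg : ∀ j ∈ t, 0 ≤ g j) (hfg : ∀ i ∈ s, ∀ j ∈ t, f i ≤ K * g j)
    (hcard : K * #s ≤ #t) : ∑ i ∈ s, f i ≤ ∑ j ∈ t, g j := by
  obtain rfl | ht := t.eq_empty_or_nonempty
  · have hs : (#s : R) ≤ 0 := nonpos_of_mul_nonpos_right (by simpa using hcard) hK
    have hs : s = ∅ := by simpa using hs.antisymm (Nat.cast_nonneg _)
    simp [hs]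
  · obtain ⟨j, hj, hmin⟩ := t.exists_min_image g ht
    calc ∑ i ∈ s, f i ≤ #s • (K * g j) := sum_le_card_nsmul _ _ _ fun i hi ↦ hfg i hi j hj
      _ = K * #s * g j := by rw [nsmul_eq_mul]; ring
      _ ≤ #t * g j := mul_le_mul_of_nonneg_right hcard (hg j hj)
      _ = #t • g j := (nsmul_eq_mul _ _).symm
      _ ≤ ∑ j ∈ t, g j := card_nsmul_le_sum _ _ _ hmin

theorem floor_lt_mul_floor_add_one {R : Type*} [Semiring R] [LinearOrder R]
    [IsStrictOrderedRing R] [FloorSemiring R] {r s : R} {K : ℕ} (hK : K ≠ 0) (h : r ≤ K * s) :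
    ⌊r⌋₊ < K * (⌊s⌋₊ + 1) := by
  rw [Nat.floor_lt' (by positivity)]
  calc r ≤ K * s := h
    _ < K * (⌊s⌋₊ + 1) := by gcongr; exact Nat.lt_floor_add_one s
    _ = (K * (⌊s⌋₊ + 1) : ℕ) := by push_cast; rfl

variable [Fintype ι] [DecidableEq ι] {S I : Finset ι}

theorem sum_le_sum_compl_of_le_two_mul_add_one {b : ι → ℕ} (hb : ∀ i j, b i ≤ 2 * b j + 1)
    (hS : ∀ i ∈ S, b i ≠ 0) (hIS : 2 * #I ≤ #S) (hI : 4 * #I ≤ Fintype.card ι) :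
    ∑ i ∈ I, b i ≤ ∑ i ∈ Iᶜ, b i := by
  by_cases hpos : ∀ j, b j ≠ 0
  · have hratio : ∀ i j, b i ≤ 3 * b j := fun i j ↦ by
      have := hb i j
      have := hpos j
      omega
    have hcard : 3 * #I ≤ #Iᶜ := by rw [card_compl]; omega
    exact sum_le_sum_of_forall_le_mul three_pos (by simp) (fun i _ j _ ↦ hratio i j) hcard
  · push Not at hpos
    obtain ⟨k, hk⟩ := hpos
    have hle_one : ∀ i, b i ≤ 1 := fun i ↦ by simpa [hk] using hb i k
    have hcard : #I ≤ #(S \ I) := by have := le_card_sdiff I S; omega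
    calc ∑ i ∈ I, b i ≤ ∑ i ∈ S \ I, b i := by
          refine sum_le_sum_of_forall_le_mul one_pos (by simp) (fun i _ j hj ↦ ?_) (by simpa)
          have := hle_one i
          have := hS j (mem_sdiff.1 hj).1
          omega
      _ ≤ ∑ i ∈ Iᶜ, b i :=
          sum_le_sum_of_subset fun i hi ↦ mem_compl.2 (mem_sdiff.1 hi).2

theorem two_mul_sum_lt_sum_of_eq_add_ite {a d : ι → ℕ}
    (ha : ∀ i, a i = d i + if i ∈ S then 0 else 1) (hd : ∑ i ∈ I, d i ≤ ∑ i ∈ Iᶜ, d i)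
    (hI : 2 * #I < #Sᶜ) : 2 * ∑ i ∈ I, a i < ∑ i, a i := by
  have hupper : ∑ i ∈ I, a i ≤ ∑ i ∈ I, d i + #I := by
    rw [card_eq_sum_ones, ← sum_add_distrib]
    exact sum_le_sum fun i _ ↦ by rw [ha]; split_ifs <;> simp
  have htotal : ∑ i, a i = ∑ i ∈ I, d i + ∑ i ∈ Iᶜ, d i + #Sᶜ := by
    simp only [ha, sum_add_distrib, sum_add_sum_compl]
    simp [sum_ite, compl_eq_univ_sdiff, filter_notMem_eq_sdiff]
  omega

theorem two_mul_sum_lt_sum_of_floor {R : Type*} [Semiring R] [LinearOrder R]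
    [IsStrictOrderedRing R] [FloorSemiring R] {v : ι → R} (hv : ∀ i j, v i ≤ 2 * v j) {c : ℕ}
    (hc : ∀ i ∈ S, ⌊v i⌋₊ ∣ c) {a : ι → ℕ} (ha : ∀ i, a i = c * ⌊v i⌋₊ + if i ∈ S then 0 else 1)
    (hIS : 2 * #I ≤ #S) (hISc : 2 * #I < #Sᶜ) : 2 * ∑ i ∈ I, a i < ∑ i, a i := by
  refine two_mul_sum_lt_sum_of_eq_add_ite ha ?_ hISc
  obtain rfl | hc0 := eq_or_ne c 0
  · simp
  have hfloor : ∀ i j, ⌊v i⌋₊ ≤ 2 * ⌊v j⌋₊ + 1 := fun i j ↦ by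
    have := floor_lt_mul_floor_add_one two_ne_zero (hv i j)
    omega
  have hfloor_ne : ∀ i ∈ S, ⌊v i⌋₊ ≠ 0 := fun i hi ↦ ne_zero_of_dvd_ne_zero hc0 (hc i hi)
  have hcard : 4 * #I ≤ Fintype.card ι := by rw [← card_add_card_compl S]; omega
  simp only [← mul_sum]
  exact Nat.mul_le_mul_left c <|
    sum_le_sum_compl_of_le_two_mul_add_one hfloor hfloor_ne hIS hcard

end

theorem chvatal_condition_a_general {n : ℕ} {w : Fin n → ℝ} (hw : ∀ i j, w i ≤ 2 * w j)
    {x : ℝ} (hx : 0 ≤ x) {c : ℕ} (hc : ∀ i : Fin n, (i : ℕ) < n / 2 → ⌊w i * x⌋.toNat ∣ c)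
    {a : Fin n → ℕ} (ha : ∀ i : Fin n, a i = if (i : ℕ) < n / 2 then c * ⌊w i * x⌋.toNat
      else c * ⌊w i * x⌋.toNat + 1) (I : Finset (Fin n)) (hI : 4 * I.card < n) :
    ∑ i ∈ I, (a i : ℝ) < 1 / 2 * ∑ i, (a i : ℝ) := by
  simp only [Int.floor_toNat] at hc ha
  have hwx : ∀ i j, w i * x ≤ 2 * (w j * x) := fun i j ↦ by
    rw [← mul_assoc]
    exact mul_le_mul_of_nonneg_right (hw i j) hx
  let S : Finset (Fin n) := {i | (i : ℕ) < n / 2}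
  have hS : S.card = n / 2 := by
    simp [S, Fin.card_filter_val_lt, Nat.div_le_self]
  have hSc : Sᶜ.card = n - n / 2 := by rw [Finset.card_compl, hS, Fintype.card_fin]
  have hsum : 2 * ∑ i ∈ I, a i < ∑ i, a i :=
    two_mul_sum_lt_sum_of_floor (S := S) hwx (fun i hi ↦ hc i (by simpa [S] using hi))
      (fun i ↦ by rw [ha]; simp only [S, Finset.mem_filter_univ]; split_ifs <;> rfl)
      (by omega) (by omega)
  have hsum_real : 2 * ∑ i ∈ I, (a i : ℝ) < ∑ i, (a i : ℝ) := by exact_mod_cast hsum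
  linarith

open Finset in
/-- Chvátal's condition (a): if `10|I| ≤ n` then `∑_{i ∈ I} aᵢ < (1/2) ∑ᵢ aᵢ`. -/
theorem chvatal_condition_a
    (n : ℕ) (hn : 1 ≤ n)
    (p : Fin n → ℕ) (hp : ∀ i, (p i).Prime) (hinj : Function.Injective p)
    (w : Fin n → ℝ) (hw : ∀ i, w i = -Real.log (1 - 1 / (p i : ℝ)))
    (hmono : ∀ i j : Fin n, i ≤ j → w j ≤ w i)
    (hratio : w ⟨0, by omega⟩ ≤ 2 * w ⟨n - 1, by omega⟩)
    (ε : ℝ)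
    (hε : IsLeast {d : ℝ | ∃ I J : Finset (Fin n), Disjoint I J ∧ (I ∪ J).Nonempty ∧
        d = |∑ i ∈ I, w i - ∑ j ∈ J, w j|} ε)
    (x : ℝ) (hx : 4 * n / ε < x)
    (c : ℕ)
    (hc : c = ((Finset.univ : Finset (Fin n)).filter fun i : Fin n => (i : ℕ) < n / 2).lcm
        fun i => (⌊w i * x⌋).toNat)
    (a : Fin n → ℕ)
    (ha : ∀ i : Fin n, a i = if (i : ℕ) < n / 2 then c * (⌊w i * x⌋).toNat
        else c * (⌊w i * x⌋).toNat + 1)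
    : ∀ I : Finset (Fin n), 10 * I.card ≤ n → (∑ i ∈ I, (a i : ℝ)) < (1 / 2) * ∑ i : Fin n, (a i : ℝ) := by
  have hw_le : ∀ i j, w i ≤ 2 * w j := fun i j ↦
    calc w i ≤ w ⟨0, by omega⟩ := hmono _ _ (Nat.zero_le i)
      _ ≤ 2 * w ⟨n - 1, by omega⟩ := hratio
      _ ≤ 2 * w j := by gcongr; exact hmono _ _ (Nat.le_sub_one_of_lt j.isLt)
  have hε_nonneg : 0 ≤ ε := by
    obtain ⟨I, J, -, -, rfl⟩ := hε.1
    exact abs_nonneg _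
  have hx_nonneg : 0 ≤ x := (by positivity : 0 ≤ 4 * n / ε).trans hx.le
  have hdvd : ∀ i : Fin n, (i : ℕ) < n / 2 → ⌊w i * x⌋.toNat ∣ c := fun i hi ↦
    hc ▸ Finset.dvd_lcm (by simpa using hi)
  exact fun I hI ↦ chvatal_condition_a_general hw_le hx_nonneg hdvd ha I (by omega)
end

section
/- With the construction below, no integer greater than 1 divides more than ⌈n/2⌉ of the numbers a₁, ..., a_n; that is, for every integer d ≥ 2, the number of indices i ∈ {1,...,n} with d ∣ a_i is at most ⌈n/2⌉ (Chvátal's condition (b)). -/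
/-!
For `i ≤ ⌊n/2⌋ < j` the factor `⌊w_i x⌋` divides `c`, so every prime factor of `a_i = c⌊w_i x⌋`
divides `c`, whereas `a_j ≡ 1 (mod c)`. Hence `a_i` and `a_j` are coprime, and for `d > 1` the
indices `i` with `d ∣ a_i` all lie in one half of `{1, ..., n}`.
-/

theorem coprime_mul_mul_add_one {c m : ℕ} (hm : m ∣ c) (k : ℕ) :
    (c * m).Coprime (c * k + 1) := by
  have hc : c.Coprime (c * k + 1) := by simp
  exact hc.mul_left (hc.coprime_dvd_left hm)

open Finset in
theorem card_filter_dvd_le_max_of_isRelPrime {ι α : Type*} [Monoid α] {s : Finset ι}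
    {P : ι → Prop} [DecidablePred P] {a : ι → α}
    (ha : ∀ i ∈ s, P i → ∀ j ∈ s, ¬P j → IsRelPrime (a i) (a j))
    {d : α} [DecidablePred fun i => d ∣ a i] (hd : ¬IsUnit d) :
    #{i ∈ s | d ∣ a i} ≤ max #{i ∈ s | P i} #{i ∈ s | ¬P i} := by
  by_cases h : ∃ i ∈ s, P i ∧ d ∣ a i
  · obtain ⟨i, his, hPi, hdi⟩ := h
    refine le_max_of_le_left (card_le_card (monotone_filter_right s fun j hjs hdj => ?_))
    by_contra hPj
    exact hd (ha i his hPi j hjs hPj hdi hdj)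
  · refine le_max_of_le_right (card_le_card (monotone_filter_right s fun j hjs hdj hPj => ?_))
    exact h ⟨j, hjs, hPj, hdj⟩

open Finset in
theorem chvatal_condition_b_general (n : ℕ) (m : Fin n → ℕ) (c : ℕ)
    (hc : ∀ i : Fin n, (i : ℕ) < n / 2 → m i ∣ c) (a : Fin n → ℕ)
    (ha : ∀ i : Fin n, a i = if (i : ℕ) < n / 2 then c * m i else c * m i + 1)
    (d : ℕ) (hd : d ≠ 1) :
    #{i | d ∣ a i} ≤ (n + 1) / 2 := by
  have hcoprime (i j : Fin n) (hi : (i : ℕ) < n / 2) (hj : ¬(j : ℕ) < n / 2) :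
      IsRelPrime (a i) (a j) := by
    rw [ha, ha, if_pos hi, if_neg hj, ← Nat.coprime_iff_isRelPrime]
    exact coprime_mul_mul_add_one (hc i hi) (m j)
  calc #{i | d ∣ a i}
    _ ≤ max #{i : Fin n | (i : ℕ) < n / 2} #{i : Fin n | ¬(i : ℕ) < n / 2} :=
        card_filter_dvd_le_max_of_isRelPrime (fun i _ hi j _ hj => hcoprime i j hi hj)
          (by rwa [Nat.isUnit_iff])
    _ = max (n / 2) (n - n / 2) := by
        rw [filter_not, card_sdiff_of_subset (filter_subset _ _), Fin.card_filter_val_lt, card_fin,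
          min_eq_right (n.div_le_self 2)]
    _ = (n + 1) / 2 := by omega

open Finset in
/-- Chvátal's condition (b): no integer `d ≥ 2` divides more than `⌈n/2⌉` of the `aᵢ`. -/
theorem chvatal_condition_b
    (n : ℕ) (hn : 1 ≤ n)
    (p : Fin n → ℕ) (hp : ∀ i, (p i).Prime) (hinj : Function.Injective p)
    (w : Fin n → ℝ) (hw : ∀ i, w i = -Real.log (1 - 1 / (p i : ℝ)))
    (hmono : ∀ i j : Fin n, i ≤ j → w j ≤ w i)
    (hratio : w ⟨0, by omega⟩ ≤ 2 * w ⟨n - 1, by omega⟩)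
    (ε : ℝ)
    (hε : IsLeast {d : ℝ | ∃ I J : Finset (Fin n), Disjoint I J ∧ (I ∪ J).Nonempty ∧
        d = |∑ i ∈ I, w i - ∑ j ∈ J, w j|} ε)
    (x : ℝ) (hx : 4 * n / ε < x)
    (c : ℕ)
    (hc : c = ((Finset.univ : Finset (Fin n)).filter fun i : Fin n => (i : ℕ) < n / 2).lcm
        fun i => (⌊w i * x⌋).toNat)
    (a : Fin n → ℕ)
    (ha : ∀ i : Fin n, a i = if (i : ℕ) < n / 2 then c * (⌊w i * x⌋).toNat
        else c * (⌊w i * x⌋).toNat + 1)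
    : ∀ d : ℕ, 2 ≤ d → ((Finset.univ : Finset (Fin n)).filter fun i => d ∣ a i).card ≤ (n + 1) / 2 :=
  fun d hd => chvatal_condition_b_general n (fun i => (⌊w i * x⌋).toNat) c
    (fun i hi => hc ▸ dvd_lcm (mem_filter.2 ⟨mem_univ i, hi⟩)) a ha d (by omega)
end
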